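/- Let n ≥ 1, let Δ denote the standard (n+1)-dimensional simplex, i.e., the convex hull of the standard basis vectors e₁, …, e_{n+2} of ℝ^{n+2}, and let F_i denote its i-th n-dimensional face, the set of points of Δ whose i-th coordinate is zero. Let X be a Hausdorff topological space of compact topological dimension at most n, i.e., for every compact subset K of X, every open cover of K admits an open refinement covering K in which every point of K belongs to at most n + 1 members. Then for every continuous map f : Δ → X, the intersection ⋂_{i=1}^{n+2} f(F_i) of the images of the n + 2 faces is nonempty. -/

import Mathlib

/-- `X` has compact topological dimension at most `n`: every open cover of every
compact subset `K` admits an open refinement covering `K` in which every point of `K`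
belongs to at most `n + 1` members. -/
def CompactTopDimLE (X : Type) [TopologicalSpace X] (n : ℕ) : Prop :=
  ∀ K : Set X, IsCompact K → ∀ (ι : Type) (U : ι → Set X),
    (∀ i, IsOpen (U i)) → K ⊆ ⋃ i, U i →
    ∃ (κ : Type) (V : κ → Set X), (∀ j, IsOpen (V j)) ∧ K ⊆ (⋃ j, V j) ∧
      (∀ j, ∃ i, V j ⊆ U i) ∧
      ∀ x ∈ K, ∃ s : Finset κ, s.card ≤ n + 1 ∧ ∀ j, x ∈ V j → j ∈ s

/-!
If the images `f(F_i)` had no common point, their complements would form an open cover of the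
compact set `f(Δ)`. Pulling a refinement of multiplicity at most `n + 1` back to `Δ` and merging the
members that avoid the same face gives open sets `A_i` that cover `Δ`, with `A_i` disjoint from
`F_i`; such sets have a common point, which therefore lies in `n + 2` distinct members of the
refinement.

The common point of the `A_i` comes from a Sperner-type statement on the grid of points of `Δ` with
coordinates in `(1/m)ℤ`: if each grid point `x` is labelled by some `i` with `x_i ≠ 0`, then a set
of grid points of diameter `O(1/m)` carries all labels. Scarf's dominance argument proves this
without a triangulation. A set `σ` of points and a set `C` of coordinates form a dominant pair if no
grid point is below `max_σ x_i` for each `i ∈ C`. Adding one element to a dominant pair or removing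
one links the pairs into paths, and parity gives a dominant pair in which `C` is the set of labels
of `σ`. The labelling condition forces `C` to contain all coordinates, and dominance then forces `σ`
to be small, since `∑ i, max_σ x_i` can hardly exceed `1`.
-/

open Finset

section Counting

variable {A B : Type*} [DecidableEq A]

lemma card_filter_image_erase_eq_two [DecidableEq B] {f : A → B} {s : Finset A} {t : Finset B}
    (himage : s.image f = t) (hcard : #s = #t + 1) :
    #{a ∈ s | (s.erase a).image f = t} = 2 := by
  obtain ⟨a, ha, b, hb, hab, hfab⟩ : ∃ a ∈ s, ∃ b ∈ s, a ≠ b ∧ f a = f b :=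
    exists_ne_map_eq_of_card_image_lt (by rw [himage, hcard]; exact Nat.lt_succ_self _)
  have image_erase_of_collision {x y : A} (hy : y ∈ s) (hxy : x ≠ y) (hf : f x = f y) :
      (s.erase x).image f = t := by
    rw [← himage]
    refine (image_subset_image (erase_subset x s)).antisymm fun w hw ↦ ?_
    obtain ⟨v, hv, rfl⟩ := mem_image.1 hw
    obtain rfl | hvx := eq_or_ne v x
    · exact hf ▸ mem_image_of_mem f (mem_erase.2 ⟨hxy.symm, hy⟩)
    · exact mem_image_of_mem f (mem_erase.2 ⟨hvx, hv⟩)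
  suffices {x ∈ s | (s.erase x).image f = t} = {a, b} by rw [this, card_pair hab]
  ext x
  simp only [mem_filter, mem_insert, mem_singleton]
  constructor
  · rintro ⟨hx, himage_erase⟩
    by_contra! hne
    have hinj : Set.InjOn f (s.erase x) :=
      injOn_of_card_image_eq (by rw [himage_erase, card_erase_of_mem hx, hcard]; rfl)
    exact hab (hinj (mem_erase.2 ⟨hne.1.symm, ha⟩) (mem_erase.2 ⟨hne.2.symm, hb⟩) hfab)
  · rintro (rfl | rfl)
    · exact ⟨ha, image_erase_of_collision hb hab hfab⟩
    · exact ⟨hb, image_erase_of_collision ha hab.symm hfab.symm⟩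

lemma even_card_filter_image_erase_eq_erase [Fintype B] [DecidableEq B] {c : A → B}
    {σ : Finset A} (b : B) (hcard : #σ = Fintype.card B) (hσ : σ.image c ≠ univ) :
    Even #{a ∈ σ | (σ.erase a).image c = univ.erase b} := by
  obtain hempty | ⟨a, ha⟩ := {a ∈ σ | (σ.erase a).image c = univ.erase b}.eq_empty_or_nonempty
  · simp [hempty]
  obtain ⟨-, ha⟩ := mem_filter.1 ha
  have hsub : univ.erase b ⊆ σ.image c := ha ▸ image_subset_image (erase_subset a σ)
  have hb : b ∉ σ.image c := fun hb ↦ hσ <| univ_subset_iff.1 <| by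
    simpa only [insert_erase (mem_univ b)] using insert_subset hb hsub
  have himage : σ.image c = univ.erase b :=
    (subset_erase.2 ⟨subset_univ _, hb⟩).antisymm hsub
  have hcard' : #σ = #(univ.erase b) + 1 := by
    rw [card_erase_add_one (mem_univ b), card_univ, hcard]
  exact (card_filter_image_erase_eq_two himage hcard').symm ▸ even_two

lemma sum_card_insert_eq_sum_card_erase [Fintype A] (𝒟 ℛ : Finset (Finset A)) :
    ∑ τ ∈ 𝒟, #{a | a ∉ τ ∧ insert a τ ∈ ℛ} = ∑ σ ∈ ℛ, #{a ∈ σ | σ.erase a ∈ 𝒟} := by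
  rw [← card_sigma, ← card_sigma]
  refine card_nbij' (fun q ↦ ⟨insert q.2 q.1, q.2⟩) (fun q ↦ ⟨q.1.erase q.2, q.2⟩) ?_ ?_ ?_ ?_
  all_goals
    rintro ⟨ρ, a⟩ h
    simp_all

end Counting

section Scarf

variable {I T α : Type*} [LinearOrder α] {p : I → T → α}

/-- The point `y` lies strictly below the maximum of `σ` in each of the orders `p i`, `i ∈ C`. -/
def Undercuts (p : I → T → α) (C : Finset I) (σ : Finset T) (y : T) : Prop :=
  ∀ i ∈ C, ∃ x ∈ σ, p i y < p i x

/-- The dominance relation of Scarf's lemma: no point undercuts `σ` in all orders from `C`. -/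
def Dominates (p : I → T → α) (C : Finset I) (σ : Finset T) : Prop :=
  ∀ y, ¬ Undercuts p C σ y

lemma Undercuts.mono {C C' : Finset I} {σ σ' : Finset T} {y : T} (h : Undercuts p C σ y)
    (hC : C' ⊆ C) (hσ : σ ⊆ σ') : Undercuts p C' σ' y := fun i hi ↦
  let ⟨x, hx, hyx⟩ := h i (hC hi)
  ⟨x, hσ hx, hyx⟩

lemma Dominates.mono {C C' : Finset I} {σ σ' : Finset T} (h : Dominates p C σ) (hC : C ⊆ C')
    (hσ : σ' ⊆ σ) : Dominates p C' σ' :=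
  fun y hy ↦ h y (hy.mono hC hσ)

variable {D : Finset I} {τ : Finset T}

lemma exists_argmax (hp : ∀ i, Function.Injective (p i)) (hτ : τ.Nonempty) :
    ∃ M : I → T, ∀ i x, M i = x ↔ x ∈ τ ∧ ∀ x' ∈ τ, p i x' ≤ p i x := by
  choose M hMτ hM using fun i ↦ τ.exists_max_image (p i) hτ
  refine ⟨M, fun i x ↦ ⟨?_, fun ⟨hx, hmax⟩ ↦ ?_⟩⟩
  · rintro rfl
    exact ⟨hMτ i, hM i⟩
  · exact hp i ((hmax _ (hMτ i)).antisymm (hM i x hx))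

lemma image_argmax_eq_iff [DecidableEq T] {M : I → T}
    (hM : ∀ i x, M i = x ↔ x ∈ τ ∧ ∀ x' ∈ τ, p i x' ≤ p i x) {C : Finset I} :
    C.image M = τ ↔ ∀ x ∈ τ, ¬ Undercuts p C τ x := by
  have himage : C.image M ⊆ τ := image_subset_iff.2 fun i _ ↦ ((hM i _).1 rfl).1
  rw [Subset.antisymm_iff, and_iff_right himage, subset_iff]
  refine forall₂_congr fun x hx ↦ ?_
  simp only [mem_image, hM, hx, true_and, Undercuts, not_forall, not_exists, not_and, not_lt,
    exists_prop]

variable [DecidableEq I]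

/-- An index of `D` that can be omitted while each point of `τ` stays the maximum of `τ` in one of
the remaining orders. -/
def IsSpare (p : I → T → α) (D : Finset I) (τ : Finset T) (k : I) : Prop :=
  k ∈ D ∧ ∀ x ∈ τ, ¬ Undercuts p (D.erase k) τ x

lemma Dominates.isSpare {k : I} (h : Dominates p (D.erase k) τ) (hk : k ∈ D) :
    IsSpare p D τ k :=
  ⟨hk, fun x _ ↦ h x⟩

lemma Dominates.eq_of_undercuts_erase {k l : I} {y : T} (hD : Dominates p D τ)
    (hk : Undercuts p (D.erase k) τ y) (hl : Undercuts p (D.erase l) τ y) : k = l := by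
  by_contra hkl
  refine hD y fun i hi ↦ ?_
  obtain rfl | hik := eq_or_ne i k
  · exact hl i (mem_erase.2 ⟨hkl, hi⟩)
  · exact hk i (mem_erase.2 ⟨hik, hi⟩)

open Classical in
lemma Dominates.card_isSpare_eq_two [Fintype I] (hp : ∀ i, Function.Injective (p i))
    (hD : Dominates p D τ) (hτ : τ.Nonempty) (hcard : #D = #τ + 1) :
    #{k | IsSpare p D τ k} = 2 := by
  obtain ⟨M, hM⟩ := exists_argmax hp hτ
  rw [← card_filter_image_erase_eq_two ((image_argmax_eq_iff hM).2 fun x _ ↦ hD x) hcard]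
  congr 1
  ext k
  rw [mem_filter_univ, mem_filter, image_argmax_eq_iff hM, IsSpare]

lemma IsSpare.dominates_erase_or_exists_dominates_insert [DecidableEq T] [Finite T] {k : I}
    (hk : IsSpare p D τ k) (hD : Dominates p D τ) :
    Dominates p (D.erase k) τ ∨
      ∃ y ∉ τ, Dominates p D (insert y τ) ∧ Undercuts p (D.erase k) τ y := by
  refine or_iff_not_imp_left.2 fun hnot ↦ ?_
  obtain ⟨y, hy, hmin⟩ := Set.exists_min_image {y | Undercuts p (D.erase k) τ y} (p k)
    (Set.toFinite _) (not_forall_not.1 hnot)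
  refine ⟨y, fun hyτ ↦ hk.2 y hyτ hy, fun z hz ↦ ?_, hy⟩
  have hz_erase : Undercuts p (D.erase k) τ z := fun l hl ↦ by
    obtain ⟨x, hx, hzx⟩ := hz l (mem_of_mem_erase hl)
    obtain rfl | hx := mem_insert.1 hx
    · obtain ⟨x', hx', hyx'⟩ := hy l hl
      exact ⟨x', hx', hzx.trans hyx'⟩
    · exact ⟨x, hx, hzx⟩
  refine hD z fun l hl ↦ ?_
  obtain rfl | hlk := eq_or_ne l k
  · obtain ⟨x, hx, hzx⟩ := hz l hl
    obtain rfl | hx := mem_insert.1 hx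
    · exact absurd hzx (hmin z hz_erase).not_gt
    · exact ⟨x, hx, hzx⟩
  · exact hz_erase l (mem_erase.2 ⟨hlk, hl⟩)

lemma Dominates.exists_isSpare_of_insert [DecidableEq T] (hp : ∀ i, Function.Injective (p i))
    {y : T} (hy : y ∉ τ) (hcard : #D = #τ + 1) (h : Dominates p D (insert y τ)) :
    ∃ k, IsSpare p D τ k ∧ Undercuts p (D.erase k) τ y := by
  obtain ⟨M, hM⟩ := exists_argmax hp (insert_nonempty y τ)
  have himage : D.image M = insert y τ := (image_argmax_eq_iff hM).2 fun x _ ↦ h x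
  have hinj : Set.InjOn M D :=
    injOn_of_card_image_eq (by rw [himage, card_insert_of_notMem hy, hcard])
  obtain ⟨k, hk, hMk⟩ := mem_image.1 (himage ▸ mem_insert_self y τ)
  have hMne : ∀ l ∈ D.erase k, M l ≠ y := fun l hl hMl ↦
    ne_of_mem_erase hl (hinj (mem_of_mem_erase hl) hk (hMl.trans hMk.symm))
  refine ⟨k, ⟨hk, fun x hx hund ↦ ?_⟩, fun l hl ↦ ?_⟩
  · obtain ⟨l, hl, hMl⟩ := mem_image.1 (himage ▸ mem_insert_of_mem hx)
    have hlk : l ≠ k := by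
      rintro rfl
      exact hy (hMk.symm.trans hMl ▸ hx)
    obtain ⟨x', hx', hlt⟩ := hund l (mem_erase.2 ⟨hlk, hl⟩)
    exact hlt.not_ge (((hM l x).1 hMl).2 x' (mem_insert_of_mem hx'))
  · obtain ⟨hMl, hmax⟩ := (hM l _).1 rfl
    exact ⟨M l, mem_of_mem_insert_of_ne hMl (hMne l hl),
      (hmax y (mem_insert_self y τ)).lt_of_ne ((hp l).ne (hMne l hl).symm)⟩

lemma Dominates.le_of_undercuts_erase [DecidableEq T] {k : I} {y z : T}
    (h : Dominates p D (insert y τ)) (hz : Undercuts p (D.erase k) τ z) : p k y ≤ p k z := by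
  by_contra! hlt
  refine h z fun l hl ↦ ?_
  obtain rfl | hlk := eq_or_ne l k
  · exact ⟨y, mem_insert_self y τ, hlt⟩
  · exact hz.mono Subset.rfl (subset_insert y τ) l (mem_erase.2 ⟨hlk, hl⟩)

variable [Fintype I]

/-- A pair `(C, σ)` with `Dominates p C σ`, encoded by the single set consisting of the points of
`σ` and of one slack element for each index outside `C`. A pair with `#C = #σ` then becomes a set
of `Fintype.card I` elements. -/
def IsDominant (p : I → T → α) (ρ : Finset (T ⊕ I)) : Prop :=
  Dominates p ρ.toRightᶜ ρ.toLeft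

/-- The element `z` extends the dominant set `ρ` at the index `k`: it is the slack element of `k`
or a point undercutting `ρ` in all other available orders. -/
def IsPivot (p : I → T → α) (ρ : Finset (T ⊕ I)) (k : I) : T ⊕ I → Prop
  | .inl y => Undercuts p (ρ.toRightᶜ.erase k) ρ.toLeft y
  | .inr j => j = k

variable {ρ : Finset (T ⊕ I)}

lemma IsDominant.mono {ρ' : Finset (T ⊕ I)} (h : IsDominant p ρ) (hρ : ρ' ⊆ ρ) :
    IsDominant p ρ' :=
  Dominates.mono h (compl_subset_compl.2 (toRight_subset_toRight hρ)) (toLeft_subset_toLeft hρ)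

lemma card_compl_toRight_eq (hcard : #ρ + 1 = Fintype.card I) :
    #ρ.toRightᶜ = #ρ.toLeft + 1 := by
  have := ρ.card_toLeft_add_card_toRight
  rw [card_compl]
  omega

lemma IsPivot.index_unique (hρ : IsDominant p ρ) {k l : I} {z : T ⊕ I} (hk : IsPivot p ρ k z)
    (hl : IsPivot p ρ l z) : k = l := by
  rcases z with y | j
  · exact hρ.eq_of_undercuts_erase hk hl
  · exact hk.symm.trans hl

lemma IsDominant.dominates_image {c : T → I} (h : IsDominant p ρ)
    (himage : ρ.image (Sum.elim c id) = univ) : Dominates p (ρ.toLeft.image c) ρ.toLeft := by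
  refine Dominates.mono h (fun i hi ↦ ?_) Subset.rfl
  obtain ⟨x | j, hz, hzi⟩ := mem_image.1 (himage ▸ mem_univ i)
  · exact mem_image.2 ⟨x, mem_toLeft.2 hz, hzi⟩
  · obtain rfl : j = i := hzi
    exact absurd (mem_toRight.2 hz) (mem_compl.1 hi)

section Pivot

variable [DecidableEq T]

lemma isDominant_insert_inl {y : T} :
    IsDominant p (insert (.inl y) ρ) ↔ Dominates p ρ.toRightᶜ (insert y ρ.toLeft) := by
  rw [IsDominant, toLeft_insert_inl, toRight_insert_inl]

lemma isDominant_insert_inr {k : I} :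
    IsDominant p (insert (.inr k) ρ) ↔ Dominates p (ρ.toRightᶜ.erase k) ρ.toLeft := by
  rw [IsDominant, toLeft_insert_inr, toRight_insert_inr, compl_insert]

lemma IsPivot.unique (hp : ∀ i, Function.Injective (p i)) {k : I} {z w : T ⊕ I}
    (hz : IsPivot p ρ k z) (hw : IsPivot p ρ k w) (hρz : IsDominant p (insert z ρ))
    (hρw : IsDominant p (insert w ρ)) : z = w := by
  rcases z with y | i <;> rcases w with y' | j
  · rw [isDominant_insert_inl] at hρz hρw
    exact congrArg _ (hp k ((hρz.le_of_undercuts_erase hw).antisymm (hρw.le_of_undercuts_erase hz)))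
  · obtain rfl : j = k := hw
    exact absurd hz (isDominant_insert_inr.1 hρw y)
  · obtain rfl : i = k := hz
    exact absurd hw (isDominant_insert_inr.1 hρz y')
  · exact congrArg _ (hz.trans hw.symm)

lemma IsSpare.exists_isPivot [Finite T] (hρ : IsDominant p ρ) {k : I}
    (hk : IsSpare p ρ.toRightᶜ ρ.toLeft k) :
    ∃ z, (z ∉ ρ ∧ IsDominant p (insert z ρ)) ∧ IsPivot p ρ k z := by
  obtain h | ⟨y, hy, h, hund⟩ := hk.dominates_erase_or_exists_dominates_insert hρ
  · exact ⟨.inr k, ⟨by simpa using hk.1, isDominant_insert_inr.2 h⟩, rfl⟩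
  · exact ⟨.inl y, ⟨by simpa using hy, isDominant_insert_inl.2 h⟩, hund⟩

lemma IsDominant.exists_isSpare_isPivot (hp : ∀ i, Function.Injective (p i))
    (hcard : #ρ + 1 = Fintype.card I) {z : T ⊕ I} (hz : z ∉ ρ) (h : IsDominant p (insert z ρ)) :
    ∃ k, IsSpare p ρ.toRightᶜ ρ.toLeft k ∧ IsPivot p ρ k z := by
  rcases z with y | j
  · exact (isDominant_insert_inl.1 h).exists_isSpare_of_insert hp (by simpa using hz)
      (card_compl_toRight_eq hcard)
  · exact ⟨j, (isDominant_insert_inr.1 h).isSpare (by simpa using hz), rfl⟩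

open Classical in
lemma IsDominant.card_insert_eq_two [Fintype T] (hp : ∀ i, Function.Injective (p i))
    (hρ : IsDominant p ρ) (hleft : ρ.toLeft.Nonempty) (hcard : #ρ + 1 = Fintype.card I) :
    #{z | z ∉ ρ ∧ IsDominant p (insert z ρ)} = 2 := by
  rw [← hρ.card_isSpare_eq_two hp hleft (card_compl_toRight_eq hcard)]
  have : Nonempty T := hleft.to_type
  choose! z hz hpivot using fun k (hk : IsSpare p ρ.toRightᶜ ρ.toLeft k) ↦ hk.exists_isPivot hρ
  refine (card_nbij z (fun k hk ↦ ?_) (fun k hk l hl hkl ↦ ?_) fun w hw ↦ ?_).symm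
  · simpa using hz k (by simpa using hk)
  · simp only [coe_filter, mem_univ, true_and, Set.mem_ofPred_eq] at hk hl
    exact (hpivot k hk).index_unique hρ (hkl ▸ hpivot l hl)
  · simp only [coe_filter, mem_univ, true_and, Set.mem_ofPred_eq] at hw
    obtain ⟨k, hk, hkw⟩ := hw.2.exists_isSpare_isPivot hp hcard hw.1
    exact ⟨k, by simpa using hk, (hpivot k hk).unique hp hkw (hz k hk).2 hw.2⟩

end Pivot

/-- The door at which the path through the rooms starts: all slack elements but that of `i₀`. -/
def slackDoor (T : Type*) (i₀ : I) : Finset (T ⊕ I) :=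
  (∅ : Finset T).disjSum (univ.erase i₀)

lemma card_slackDoor_add_one (i₀ : I) : #(slackDoor T i₀) + 1 = Fintype.card I := by
  rw [slackDoor, card_disjSum, card_empty, zero_add, card_erase_add_one (mem_univ i₀), card_univ]

variable [Fintype T] {c : T → I} {i₀ : I}

open Classical in
/-- The dominant sets that correspond to pairs `(C, σ)` with `#C = #σ`, the vertices of the
path-following graph of Scarf's argument. -/
noncomputable def scarfRooms (p : I → T → α) : Finset (Finset (T ⊕ I)) :=
  {ρ | #ρ = Fintype.card I ∧ IsDominant p ρ}

open Classical in
/-- The dominant sets with one element less than a room on which the colouring `c`, extended to the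
slack elements by their indices, takes each value other than `i₀` exactly once. -/
noncomputable def scarfDoors (p : I → T → α) (c : T → I) (i₀ : I) : Finset (Finset (T ⊕ I)) :=
  {ρ | #ρ + 1 = Fintype.card I ∧ ρ.image (Sum.elim c id) = univ.erase i₀ ∧ IsDominant p ρ}

lemma mem_scarfRooms : ρ ∈ scarfRooms p ↔ #ρ = Fintype.card I ∧ IsDominant p ρ := by
  classical exact mem_filter_univ _

lemma mem_scarfDoors : ρ ∈ scarfDoors p c i₀ ↔
    #ρ + 1 = Fintype.card I ∧ ρ.image (Sum.elim c id) = univ.erase i₀ ∧ IsDominant p ρ := by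
  classical exact mem_filter_univ _

lemma slackDoor_mem_scarfDoors : slackDoor T i₀ ∈ scarfDoors p c i₀ := by
  have himage : (slackDoor T i₀).image (Sum.elim c id) = univ.erase i₀ := by
    ext i
    simp [slackDoor]
  have hdom : IsDominant p (slackDoor T i₀) := by
    simp [IsDominant, slackDoor, Dominates, Undercuts]
  exact mem_scarfDoors.2 ⟨card_slackDoor_add_one i₀, himage, hdom⟩

lemma toLeft_nonempty_of_mem_scarfDoors (hρ : ρ ∈ scarfDoors p c i₀) (hne : ρ ≠ slackDoor T i₀) :
    ρ.toLeft.Nonempty := by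
  obtain ⟨hcard, himage, -⟩ := mem_scarfDoors.1 hρ
  by_contra hleft
  refine hne (eq_of_subset_of_card_le ?_ ?_)
  · rw [slackDoor, subset_disjSum]
    refine ⟨(not_nonempty_iff_eq_empty.1 hleft).le, fun i hi ↦ ?_⟩
    exact himage ▸ mem_image.2 ⟨.inr i, mem_toRight.1 hi, rfl⟩
  · have := card_slackDoor_add_one (T := T) i₀
    omega

variable [DecidableEq T]

lemma even_card_erase_mem_scarfDoors (hρ : ρ ∈ scarfRooms p)
    (himage : ρ.image (Sum.elim c id) ≠ univ) :
    Even #{z ∈ ρ | ρ.erase z ∈ scarfDoors p c i₀} := by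
  obtain ⟨hcard, hdom⟩ := mem_scarfRooms.1 hρ
  convert even_card_filter_image_erase_eq_erase i₀ hcard himage using 2
  refine filter_congr fun z hz ↦ ?_
  simp [mem_scarfDoors, card_erase_add_one hz, hcard, hdom.mono (erase_subset z ρ)]

lemma insert_mem_scarfRooms_iff (hcard : #ρ + 1 = Fintype.card I) {z : T ⊕ I} (hz : z ∉ ρ) :
    insert z ρ ∈ scarfRooms p ↔ IsDominant p (insert z ρ) := by
  simp [mem_scarfRooms, card_insert_of_notMem hz, hcard]

lemma card_insert_slackDoor_mem_scarfRooms [Nonempty T] (hp : Function.Injective (p i₀)) :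
    #{z | z ∉ slackDoor T i₀ ∧ insert z (slackDoor T i₀) ∈ scarfRooms p} = 1 := by
  obtain ⟨y, -, hy⟩ := univ.exists_min_image (p i₀) (univ_nonempty (α := T))
  refine card_eq_one.2 ⟨.inl y, ?_⟩
  ext z
  rw [mem_filter_univ, mem_singleton,
    and_congr_right fun hz ↦ insert_mem_scarfRooms_iff (card_slackDoor_add_one i₀) hz]
  rcases z with x | j
  · suffices (∀ z, p i₀ x ≤ p i₀ z) ↔ x = y by
      simpa [slackDoor, isDominant_insert_inl, Dominates, Undercuts]
    exact ⟨fun hx ↦ hp ((hx y).antisymm (hy x (mem_univ x))), fun hx z ↦ hx ▸ hy z (mem_univ z)⟩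
  · simp [slackDoor, isDominant_insert_inr, Dominates, Undercuts, eq_comm]

lemma card_insert_mem_scarfRooms (hp : ∀ i, Function.Injective (p i))
    (hρ : ρ ∈ scarfDoors p c i₀) (hne : ρ ≠ slackDoor T i₀) :
    #{z | z ∉ ρ ∧ insert z ρ ∈ scarfRooms p} = 2 := by
  classical
  obtain ⟨hcard, -, hdom⟩ := mem_scarfDoors.1 hρ
  rw [← hdom.card_insert_eq_two hp (toLeft_nonempty_of_mem_scarfDoors hρ hne) hcard]
  exact congrArg card
    (filter_congr fun z _ ↦ and_congr_right fun hz ↦ insert_mem_scarfRooms_iff hcard hz)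

end Scarf

theorem exists_dominates_image_of_injective {I T α : Type*} [DecidableEq I] [Finite I]
    [Finite T] [Nonempty T] [LinearOrder α] {p : I → T → α}
    (hp : ∀ i, Function.Injective (p i)) (c : T → I) :
    ∃ σ : Finset T, Dominates p (σ.image c) σ := by
  classical
  cases nonempty_fintype I
  cases nonempty_fintype T
  by_contra! hnone
  let i₀ := c (Classical.arbitrary T)
  have heven : Even (∑ σ ∈ scarfRooms p, #{z ∈ σ | σ.erase z ∈ scarfDoors p c i₀}) :=
    even_sum _ fun σ hσ ↦ even_card_erase_mem_scarfDoors hσ fun himage ↦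
      hnone _ ((mem_scarfRooms.1 hσ).2.dominates_image himage)
  have hodd : Odd (∑ τ ∈ scarfDoors p c i₀, #{z | z ∉ τ ∧ insert z τ ∈ scarfRooms p}) := by
    rw [← add_sum_erase _ _ slackDoor_mem_scarfDoors,
      card_insert_slackDoor_mem_scarfRooms (hp i₀)]
    refine Even.one_add <| even_sum _ fun τ hτ ↦ ?_
    rw [card_insert_mem_scarfRooms hp (mem_of_mem_erase hτ) (ne_of_mem_erase hτ)]
    exact even_two
  rw [sum_card_insert_eq_sum_card_erase] at hodd
  exact Nat.not_even_iff_odd.2 hodd heven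

theorem exists_dominates_image {I T α : Type*} [DecidableEq I] [Finite I] [Finite T] [Nonempty T]
    [LinearOrder α] (p : I → T → α) (c : T → I) :
    ∃ σ : Finset T, Dominates p (σ.image c) σ := by
  cases nonempty_fintype T
  let q (i : I) (x : T) : α ×ₗ Fin (Fintype.card T) := toLex (p i x, Fintype.equivFin T x)
  have hq (i : I) : Function.Injective (q i) := fun x y hxy ↦
    (Fintype.equivFin T).injective (Prod.ext_iff.1 (toLex.injective hxy)).2
  obtain ⟨σ, hσ⟩ := exists_dominates_image_of_injective hq c
  refine ⟨σ, fun y hy ↦ hσ y fun i hi ↦ ?_⟩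
  obtain ⟨x, hx, hyx⟩ := hy i hi
  exact ⟨x, hx, Prod.Lex.toLex_lt_toLex.2 (.inl hyx)⟩

section Sperner

variable {I : Type*} [Fintype I] [DecidableEq I] {m : ℕ}

lemma eq_univ_of_dominates {σ : Finset (piAntidiag (univ : Finset I) m)} {C : Finset I}
    (hC : ∀ i ∈ C, ∃ x ∈ σ, x.1 i ≠ 0) (h : Dominates (fun i x ↦ x.1 i) C σ) : C = univ := by
  refine eq_univ_iff_forall.2 fun k ↦ by_contra fun hk ↦ ?_
  refine h ⟨Pi.single k m, by simp⟩ fun i hi ↦ ?_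
  obtain ⟨x, hx, hxi⟩ := hC i hi
  have hik : i ≠ k := ne_of_mem_of_not_mem hi hk
  exact ⟨x, hx, by simpa [hik] using Nat.pos_of_ne_zero hxi⟩

lemma sum_sup_lt_of_dominates {σ : Finset (piAntidiag (univ : Finset I) m)}
    (hσ : ∀ i, ∃ x ∈ σ, x.1 i ≠ 0) (h : Dominates (fun i x ↦ x.1 i) univ σ) :
    ∑ i, σ.sup (fun x ↦ x.1 i) < m + Fintype.card I := by
  by_contra! hle
  have hpos (i : I) : 1 ≤ σ.sup fun x ↦ x.1 i :=
    let ⟨x, hx, hxi⟩ := hσ i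
    (Nat.one_le_iff_ne_zero.2 hxi).trans (le_sup (f := fun x ↦ x.1 i) hx)
  have hsum : m ≤ ∑ i, (σ.sup (fun x ↦ x.1 i) - 1) := by
    rw [sum_tsub_distrib _ fun i _ ↦ hpos i, sum_const, card_univ, smul_eq_mul, mul_one]
    omega
  obtain ⟨y, hy, hym⟩ := Finsupp.exists_le_degree_eq
    (Finsupp.equivFunOnFinite.symm fun i ↦ σ.sup (fun x ↦ x.1 i) - 1) m
    (by simpa [Finsupp.degree_eq_sum] using hsum)
  refine h ⟨y, by simpa [Finsupp.degree_eq_sum] using hym⟩ fun i _ ↦ ?_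
  have hyi : y i < σ.sup fun x ↦ x.1 i := (hy i).trans_lt (Nat.sub_lt (hpos i) one_pos)
  exact (Finset.lt_sup_iff).1 hyi

lemma apply_lt_apply_add_of_dominates {σ : Finset (piAntidiag (univ : Finset I) m)}
    (hσ : ∀ i, ∃ x ∈ σ, x.1 i ≠ 0) (h : Dominates (fun i x ↦ x.1 i) univ σ)
    {x y : piAntidiag (univ : Finset I) m} (hx : x ∈ σ) (hy : y ∈ σ) (k : I) :
    x.1 k < y.1 k + Fintype.card I := by
  have hsup := sum_sup_lt_of_dominates hσ h
  have hysum : ∑ i, y.1 i = m := (mem_piAntidiag.1 y.2).1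
  have hxk : x.1 k ≤ σ.sup fun z ↦ z.1 k := le_sup (f := fun z ↦ z.1 k) hx
  have hrest : ∑ i ∈ univ.erase k, y.1 i ≤ ∑ i ∈ univ.erase k, σ.sup (fun z ↦ z.1 i) :=
    sum_le_sum fun i _ ↦ le_sup (f := fun z ↦ z.1 i) hy
  rw [← add_sum_erase _ _ (mem_univ k)] at hsup hysum
  omega

theorem exists_image_eq_univ_of_sperner_labelling [Nonempty I]
    {c : piAntidiag (univ : Finset I) m → I}
    (hc : ∀ x : piAntidiag (univ : Finset I) m, x.1 (c x) ≠ 0) :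
    ∃ σ : Finset (piAntidiag (univ : Finset I) m), σ.image c = univ ∧
      ∀ x ∈ σ, ∀ y ∈ σ, ∀ k, x.1 k < y.1 k + Fintype.card I := by
  have : Nonempty (piAntidiag (univ : Finset I) m) :=
    ⟨Pi.single (Classical.arbitrary I) m, by simp⟩
  obtain ⟨σ, hσ⟩ := exists_dominates_image (fun i (x : piAntidiag (univ : Finset I) m) ↦ x.1 i) c
  have hlabel : ∀ i ∈ σ.image c, ∃ x ∈ σ, x.1 i ≠ 0 := fun i hi ↦
    let ⟨x, hx, hxi⟩ := mem_image.1 hi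
    ⟨x, hx, hxi ▸ hc x⟩
  have himage := eq_univ_of_dominates hlabel hσ
  rw [himage] at hσ hlabel
  exact ⟨σ, himage, fun x hx y hy ↦
    apply_lt_apply_add_of_dominates (fun i ↦ hlabel i (mem_univ i)) hσ hx hy⟩

end Sperner

section Covering

variable {I : Type*} [Fintype I]

/-- The point with barycentric coordinates `x i / m`. -/
noncomputable def gridPoint [DecidableEq I] {m : ℕ} (hm : m ≠ 0)
    (x : piAntidiag (univ : Finset I) m) : stdSimplex ℝ I :=
  ⟨fun i ↦ x.1 i / m, fun i ↦ by positivity, by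
    rw [← sum_div, ← Nat.cast_sum, (mem_piAntidiag.1 x.2).1, div_self (Nat.cast_ne_zero.2 hm)]⟩

lemma gridPoint_apply [DecidableEq I] {m : ℕ} (hm : m ≠ 0) (x : piAntidiag (univ : Finset I) m)
    (i : I) : (gridPoint hm x).1 i = x.1 i / m :=
  rfl

lemma dist_gridPoint_le [DecidableEq I] {m N : ℕ} (hm : m ≠ 0)
    {x y : piAntidiag (univ : Finset I) m} (hxy : ∀ k, x.1 k ≤ y.1 k + N)
    (hyx : ∀ k, y.1 k ≤ x.1 k + N) : dist (gridPoint hm x) (gridPoint hm y) ≤ N / m := by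
  rw [Subtype.dist_eq, dist_pi_le_iff (by positivity)]
  intro k
  have hxy' : (x.1 k : ℝ) ≤ y.1 k + N := mod_cast hxy k
  have hyx' : (y.1 k : ℝ) ≤ x.1 k + N := mod_cast hyx k
  rw [Real.dist_eq, gridPoint_apply, gridPoint_apply, ← sub_div, abs_div, Nat.abs_cast]
  gcongr
  exact abs_sub_le_iff.2 ⟨by linarith, by linarith⟩

theorem nonempty_iInter_of_isOpen_cover_stdSimplex [Nonempty I] {A : I → Set (stdSimplex ℝ I)}
    (hopen : ∀ i, IsOpen (A i)) (hcover : ⋃ i, A i = Set.univ)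
    (hface : ∀ i, ∀ x ∈ A i, x.1 i ≠ 0) : (⋂ i, A i).Nonempty := by
  classical
  obtain ⟨δ, hδ, hball⟩ := lebesgue_number_lemma_of_metric isCompact_univ hopen hcover.ge
  obtain ⟨m, hm⟩ := exists_nat_gt (Fintype.card I / δ)
  have hm0 : m ≠ 0 := by
    rintro rfl
    exact hm.not_ge (by rw [Nat.cast_zero]; positivity)
  have hmesh : (Fintype.card I / m : ℝ) < δ := by
    rwa [div_lt_comm₀ (by positivity) hδ]
  choose label hlabel using fun x ↦ hball x (Set.mem_univ x)
  have hsperner (x : piAntidiag (univ : Finset I) m) : x.1 (label (gridPoint hm0 x)) ≠ 0 :=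
    fun hx ↦ hface _ (gridPoint hm0 x) (hlabel _ (Metric.mem_ball_self hδ))
      (by simp [gridPoint_apply, hx])
  obtain ⟨σ, himage, hclose⟩ := exists_image_eq_univ_of_sperner_labelling hsperner
  obtain ⟨x, hx⟩ : σ.Nonempty := image_nonempty.1 (himage ▸ univ_nonempty)
  refine ⟨gridPoint hm0 x, Set.mem_iInter.2 fun i ↦ ?_⟩
  obtain ⟨y, hy, rfl⟩ := mem_image.1 (himage ▸ mem_univ i)
  exact hlabel _ ((dist_gridPoint_le hm0 (fun k ↦ (hclose x hx y hy k).le)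
    fun k ↦ (hclose y hy x hx k).le).trans_lt hmesh)

theorem exists_injective_forall_mem_of_isOpen_cover_stdSimplex [Nonempty I] {κ : Type*}
    {V : κ → Set (stdSimplex ℝ I)} (hopen : ∀ j, IsOpen (V j)) (hcover : ⋃ j, V j = Set.univ)
    (hface : ∀ j, ∃ i, ∀ x ∈ V j, x.1 i ≠ 0) :
    ∃ x, ∃ J : I → κ, Function.Injective J ∧ ∀ i, x ∈ V (J i) := by
  choose φ hφ using hface
  have hcover' : ⋃ i, ⋃ j ∈ φ ⁻¹' {i}, V j = Set.univ := by
    rw [← hcover]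
    ext x
    simp
  obtain ⟨x, hx⟩ := nonempty_iInter_of_isOpen_cover_stdSimplex
    (fun i ↦ isOpen_biUnion fun j (_ : j ∈ φ ⁻¹' {i}) ↦ hopen j) hcover' fun i x hx ↦ by
      obtain ⟨j, rfl, hj⟩ := Set.mem_iUnion₂.1 hx
      exact hφ j x hj
  choose J hJφ hJV using fun i ↦ Set.mem_iUnion₂.1 (Set.mem_iInter.1 hx i)
  exact ⟨x, J, Function.LeftInverse.injective (g := φ) hJφ, hJV⟩

end Covering

lemma isClosed_image_face {I X : Type*} [Fintype I] [TopologicalSpace X] [T2Space X]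
    {f : stdSimplex ℝ I → X} (hf : Continuous f) (i : I) :
    IsClosed (f '' {x : stdSimplex ℝ I | (x : I → ℝ) i = 0}) := by
  have hface : IsClosed {x : stdSimplex ℝ I | (x : I → ℝ) i = 0} :=
    isClosed_eq ((continuous_apply i).comp continuous_subtype_val) continuous_const
  exact (hface.isCompact.image hf).isClosed

/-- For any continuous map `f` from the standard `(n+1)`-simplex to a Hausdorff space
of compact topological dimension at most `n`, the images of the `n + 2` facets have
a common point. -/
theorem images_of_faces_intersect (n : ℕ) (hn : 1 ≤ n)
    {X : Type} [TopologicalSpace X] [T2Space X]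
    (hdim : CompactTopDimLE X n)
    (f : stdSimplex ℝ (Fin (n + 2)) → X) (hf : Continuous f) :
    (⋂ i : Fin (n + 2),
      f '' {x : stdSimplex ℝ (Fin (n + 2)) | (x : Fin (n + 2) → ℝ) i = 0}).Nonempty := by
  by_contra hempty
  obtain ⟨κ, V, hopen, hcover, hrefine, hmult⟩ := hdim (Set.range f) (isCompact_range hf)
    (Fin (n + 2)) _ (fun i ↦ (isClosed_image_face hf i).isOpen_compl)
    (by simp [← Set.compl_iInter, Set.not_nonempty_iff_eq_empty.1 hempty])
  obtain ⟨x, J, hJ, hxJ⟩ := exists_injective_forall_mem_of_isOpen_cover_stdSimplex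
    (fun j ↦ (hopen j).preimage hf)
    (by rw [← Set.preimage_iUnion]; exact Set.preimage_eq_univ_iff.2 hcover) fun j ↦ by
      obtain ⟨i, hi⟩ := hrefine j
      exact ⟨i, fun x hx hxi ↦ hi hx ⟨x, hxi, rfl⟩⟩
  obtain ⟨s, hs, hmem⟩ := hmult (f x) (Set.mem_range_self x)
  have hcard : Fintype.card (Fin (n + 2)) ≤ #s :=
    card_le_card_of_injOn J (fun i _ ↦ hmem _ (hxJ i)) hJ.injOn
  rw [Fintype.card_fin] at hcard
  omega
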